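/- The free boundary problem (2.11)–(2.14) has at most one nontrivial solution: if (V, x1*, x2*) and (W, y1*, y2*) are both nontrivial solutions, then x1* = y1*, x2* = y2* and V = W on ℝ. -/

import Mathlib

/-!
Let `p > 0` solve `p' = (2b/σ²) p`. The equation `(σ²/2) U'' + b U' - λ U = -g` says that `U` and
`P = p U'` satisfy `U' = P/p` and `P' = (2p/σ²)(λ U - g)`. If `g ≤ 0` this is a cooperative system,
so nonnegative data at a left endpoint stay nonnegative and `U`, `P` are nondecreasing (`coop`,
`IsSol.nonneg`); if `g < 0` they become positive at once (`IsSol.pos`). The reflection `x ↦ -x`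
gives the corresponding statements from a right endpoint.

For a nontrivial solution of the free boundary problem this yields `x1 < x1l` and `x2r < x2`
(`IsFB.left_lt`, `IsFB.lt_right`), with `V, V' > 0` on `(x1, x1l]` and `V > 0 > V'` on `[x2r, x2)`.

Given two nontrivial solutions with, say, `x1 < y1`, the difference `D = V - W` solves the
homogeneous equation (`g = 0`) on the common interval and has `D, D' > 0` at `y1`, hence `D > 0` and
`D' ≥ 0` up to `min x2 y2`. If `x2 ≤ y2` this contradicts `D x2 = -W x2 ≤ 0`; if `y2 < x2` it
contradicts `D' y2 = V' y2 < 0`. So `x1 = y1`, by reflection `x2 = y2`, and `V = W` follows from the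
comparison principle applied to `V - W` and `W - V`.
-/

open MeasureTheory Set Filter

noncomputable section

def LocBddAt (F : ℝ → ℝ) (x : ℝ) : Prop :=
  ∃ ε > 0, ∃ C : ℝ, ∀ y ∈ Set.Ioo (x - ε) (x + ε), |F y| ≤ C

/-- shape of `f` as in Figure 1 -/
def Shape (f : ℝ → ℝ) (x1l x1r x2l x2r : ℝ) : Prop :=
  x1l ≤ x1r ∧ x1r < x2l ∧ x2l ≤ x2r ∧
  (∀ x ∈ Set.Ioo x1r x2l, 0 < f x) ∧
  (∀ x ∈ Set.Icc x1l x1r ∪ Set.Icc x2l x2r, f x = 0) ∧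
  (∀ x ∈ Set.Iio x1l ∪ Set.Ioi x2r, f x < 0)

/-- Engelbert–Schmidt condition (2.2) together with Borel measurability -/
def ES (b σ : ℝ → ℝ) : Prop :=
  Measurable b ∧ Measurable σ ∧ (∀ x, σ x ≠ 0) ∧
  LocallyIntegrable (fun x => 1 / (σ x) ^ 2) volume ∧
  LocallyIntegrable (fun x => b x / (σ x) ^ 2) volume

/-- condition (2.3) -/
def Cond23 (f σ : ℝ → ℝ) (x1l x1r x2l x2r : ℝ) : Prop :=
  LocallyIntegrable (fun x => f x / (σ x) ^ 2) volume ∧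
  ∀ x ∉ Set.Icc x1l x1r ∪ Set.Icc x2l x2r, LocBddAt (fun y => 1 / f y) x

/-- `b` is locally bounded on `ℝ` -/
def LocBdd (b : ℝ → ℝ) : Prop := ∀ x : ℝ, LocBddAt b x


/-- classical ε-δ absolute continuity of `F` on `[a,b]` -/
def AbsCont (F : ℝ → ℝ) (a b : ℝ) : Prop :=
  ∀ ε > 0, ∃ δ > 0, ∀ n : ℕ, ∀ s t : Fin n → ℝ,
    (∀ i, a ≤ s i ∧ s i ≤ t i ∧ t i ≤ b) →
    (Pairwise fun i j => Disjoint (Set.Ioo (s i) (t i)) (Set.Ioo (s j) (t j))) →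
    (∑ i, (t i - s i)) < δ → (∑ i, |F (t i) - F (s i)|) < ε

/-- a solution of the free boundary problem (2.11)–(2.14): `V = 0` outside `(x1, x2)`,
`V ∈ C¹([x1, x2])` (with one-sided derivatives at the endpoints) with
`V′(x1) = V′(x2) = 0`, `V′` absolutely continuous on `[x1, x2]`, and
`(σ²/2)·V″ + b·V′ − λ·V = −f` Lebesgue-a.e. on `(x1, x2)`, where `V″` is the
a.e.-defined derivative of `V′`. -/
def SolFBP1114 (b σ f : ℝ → ℝ) (lam : ℝ) (V : ℝ → ℝ) (x1 x2 : ℝ) : Prop :=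
  x1 < x2 ∧
  (∀ x ∉ Set.Ioo x1 x2, V x = 0) ∧
  ∃ V' : ℝ → ℝ,
    (∀ x ∈ Set.Icc x1 x2, HasDerivWithinAt V (V' x) (Set.Icc x1 x2) x) ∧
    ContinuousOn V' (Set.Icc x1 x2) ∧
    V' x1 = 0 ∧ V' x2 = 0 ∧
    AbsCont V' x1 x2 ∧
    ∀ᵐ x, x ∈ Set.Ioo x1 x2 → ∃ d, HasDerivAt V' d x ∧
      (σ x) ^ 2 / 2 * d + b x * V' x - lam * V x = -f x

/-! ### Absolutely continuous functions -/

lemma AbsCont.toInterval {F : ℝ → ℝ} {a c : ℝ} (hac : a ≤ c) (h : AbsCont F a c) :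
    AbsolutelyContinuousOnInterval F a c := by
  rw [absolutelyContinuousOnInterval_iff]
  intro ε hε
  obtain ⟨δ, hδ, H⟩ := h ε hε
  refine ⟨δ, hδ, fun E hE hlen => ?_⟩
  obtain ⟨n, I⟩ := E
  obtain ⟨hI, hdisj⟩ := hE
  simp only [uIcc_of_le hac, Finset.mem_range, mem_Icc] at hI
  have key := H n (fun i => min (I i).1 (I i).2) (fun i => max (I i).1 (I i).2)
    (fun i => by
      have := hI i i.2
      exact ⟨le_min this.1.1 this.2.1, min_le_max, max_le this.1.2 this.2.2⟩)
    (fun i j hij => by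
      have := hdisj (Finset.mem_coe.2 (Finset.mem_range.2 i.2))
        (Finset.mem_coe.2 (Finset.mem_range.2 j.2)) (fun h => hij (Fin.ext h))
      exact Disjoint.mono Ioo_subset_Ioc_self Ioo_subset_Ioc_self this)
    (by
      rw [Finset.sum_range] at hlen
      simpa [max_sub_min_eq_abs', Real.dist_eq] using hlen)
  rw [Finset.sum_range]
  refine lt_of_le_of_lt (Finset.sum_le_sum fun i _ => ?_) key
  rcases le_total (I i).1 (I i).2 with h' | h'
  · simp [h', Real.dist_eq, abs_sub_comm]
  · simp [h', Real.dist_eq]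

lemma AbsCont.mono {F : ℝ → ℝ} {a c a' c' : ℝ} (h : AbsCont F a c) (ha : a ≤ a') (hc : c' ≤ c) :
    AbsCont F a' c' := by
  intro ε hε
  obtain ⟨δ, hδ, H⟩ := h ε hε
  exact ⟨δ, hδ, fun n s t hst => H n s t fun i =>
    ⟨ha.trans (hst i).1, (hst i).2.1, (hst i).2.2.trans hc⟩⟩

lemma AbsCont.sub {F G : ℝ → ℝ} {a c : ℝ} (hF : AbsCont F a c) (hG : AbsCont G a c) :
    AbsCont (fun x => F x - G x) a c := by
  intro ε hε
  obtain ⟨δ₁, hδ₁, H₁⟩ := hF (ε / 2) (by positivity)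
  obtain ⟨δ₂, hδ₂, H₂⟩ := hG (ε / 2) (by positivity)
  refine ⟨min δ₁ δ₂, lt_min hδ₁ hδ₂, fun n s t hst hd hlen => ?_⟩
  have h₁ := H₁ n s t hst hd (hlen.trans_le (min_le_left _ _))
  have h₂ := H₂ n s t hst hd (hlen.trans_le (min_le_right _ _))
  have : ∑ i, |(F (t i) - G (t i)) - (F (s i) - G (s i))|
      ≤ ∑ i, |F (t i) - F (s i)| + ∑ i, |G (t i) - G (s i)| := by
    rw [← Finset.sum_add_distrib]
    refine Finset.sum_le_sum fun i _ => ?_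
    rw [show (F (t i) - G (t i)) - (F (s i) - G (s i))
      = (F (t i) - F (s i)) - (G (t i) - G (s i)) by ring]
    exact abs_sub _ _
  linarith

lemma AbsCont.neg {F : ℝ → ℝ} {a c : ℝ} (hF : AbsCont F a c) :
    AbsCont (fun x => -F x) a c := by
  intro ε hε
  obtain ⟨δ, hδ, H⟩ := hF ε hε
  refine ⟨δ, hδ, fun n s t hst hd hlen => ?_⟩
  convert H n s t hst hd hlen using 2 with i
  rw [← abs_neg]
  ring_nf

lemma AbsCont.reflect {F : ℝ → ℝ} {a c : ℝ} (hF : AbsCont F a c) :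
    AbsCont (fun x => F (-x)) (-c) (-a) := by
  intro ε hε
  obtain ⟨δ, hδ, H⟩ := hF ε hε
  refine ⟨δ, hδ, fun n s t hst hd hlen => ?_⟩
  have key := H n (fun i => -t i) (fun i => -s i)
    (fun i => ⟨by linarith [(hst i).2.2], by linarith [(hst i).2.1], by linarith [(hst i).1]⟩)
    (fun i j hij => by
      refine Set.disjoint_left.2 fun x hx hx' => ?_
      have hxi : -x ∈ Ioo (s i) (t i) := ⟨by linarith [hx.2], by linarith [hx.1]⟩
      have hxj : -x ∈ Ioo (s j) (t j) := ⟨by linarith [hx'.2], by linarith [hx'.1]⟩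
      exact Set.disjoint_left.1 (hd hij) hxi hxj)
    (by convert hlen using 2 with i; ring)
  convert key using 2 with i
  rw [abs_sub_comm]

lemma acoi_exp {K : ℝ → ℝ} {a c : ℝ} (hK : AbsolutelyContinuousOnInterval K a c) :
    AbsolutelyContinuousOnInterval (fun x => Real.exp (K x)) a c := by
  obtain ⟨C, hC⟩ := hK.exists_bound
  have hlip : ∀ x ∈ uIcc a c, ∀ y ∈ uIcc a c,
      dist (Real.exp (K x)) (Real.exp (K y)) ≤ Real.exp C * dist (K x) (K y) := by
    intro x hx y hy
    have := Convex.norm_image_sub_le_of_norm_deriv_le (f := Real.exp) (s := Icc (-C) C)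
      (C := Real.exp C) (x := K y) (y := K x)
      (fun z _ => Real.differentiableAt_exp)
      (fun z hz => by
        rw [Real.deriv_exp, Real.norm_eq_abs, Real.abs_exp]
        exact Real.exp_le_exp.2 hz.2)
      (convex_Icc _ _) (abs_le.1 (hC y hy)) (abs_le.1 (hC x hx))
    simpa [Real.dist_eq] using this
  have h0 := Tendsto.const_mul (Real.exp C) hK
  rw [mul_zero] at h0
  refine squeeze_zero' (Eventually.of_forall fun t => Finset.sum_nonneg fun i _ => dist_nonneg)
    ?_ h0
  filter_upwards [mem_inf_of_right (mem_principal_self _)] with E hE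
  rw [Finset.mul_sum]
  exact Finset.sum_le_sum fun i hi => hlip _ (hE.1 i hi).1 _ (hE.1 i hi).2

/-- An integrating factor: a positive, locally absolutely continuous solution of `p' = g p`. -/
lemma exists_integrating_factor {g : ℝ → ℝ} (hg : LocallyIntegrable g volume) :
    ∃ p : ℝ → ℝ, (∀ x, 0 < p x) ∧ (∀ a c, AbsolutelyContinuousOnInterval p a c) ∧
      Continuous p ∧ ∀ᵐ x, HasDerivAt p (g x * p x) x := by
  have hac : ∀ a c, AbsolutelyContinuousOnInterval (fun x => Real.exp (∫ v in (0 : ℝ)..x, g v))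
      a c := by
    intro a c
    refine acoi_exp ?_
    have hgi : ∀ u v, IntervalIntegrable g volume u v := fun u v =>
      (hg.integrableOn_isCompact isCompact_uIcc).intervalIntegrable
    set R := max |a| |c|
    have hR : 0 ≤ R := (abs_nonneg a).trans (le_max_left _ _)
    refine ((hgi (-R) R).absolutelyContinuousOnInterval_intervalIntegral
      (c := 0) ?_).mono ?_
    · rw [uIcc_of_le (by linarith)]; exact ⟨by linarith, hR⟩
    · rw [uIcc_of_le (by linarith : -R ≤ R)]
      refine uIcc_subset_Icc ?_ ?_
      · exact abs_le.1 (le_max_left _ _)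
      · exact abs_le.1 (le_max_right _ _)
  refine ⟨_, fun x => Real.exp_pos _, hac, ?_, ?_⟩
  · rw [continuous_iff_continuousAt]
    intro x
    refine (hac (x - 1) (x + 1)).continuousOn.continuousAt ?_
    rw [uIcc_of_le (by linarith)]
    exact Icc_mem_nhds (by linarith) (by linarith)
  · filter_upwards [LocallyIntegrable.ae_hasDerivAt_integral hg] with x hx
    have := (hx 0).exp
    rwa [mul_comm] at this

lemma monotoneOn_of_ae_deriv_nonneg {F : ℝ → ℝ} {a c : ℝ} (hac : a ≤ c)
    (hF : AbsolutelyContinuousOnInterval F a c)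
    (h : ∀ᵐ x, x ∈ Ioo a c → ∃ d, HasDerivAt F d x ∧ 0 ≤ d) : MonotoneOn F (Icc a c) := by
  intro s hs t ht hst
  have := (hF.mono (c := s) (d := t) (by
    rw [uIcc_of_le hst, uIcc_of_le hac]; exact Icc_subset_Icc hs.1 ht.2)).integral_deriv_eq_sub
  have h2 : 0 ≤ ∫ x in s..t, deriv F x := by
    refine intervalIntegral.integral_nonneg_of_ae_restrict hst ?_
    have hne : ∀ᵐ x : ℝ, x ≠ s ∧ x ≠ t := by
      filter_upwards [Measure.ae_ne volume s, Measure.ae_ne volume t] with x h1 h2 using ⟨h1, h2⟩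
    rw [EventuallyLE, ae_restrict_iff' measurableSet_Icc]
    filter_upwards [h, hne] with x hx hx' hxI
    obtain ⟨d, hd, hd0⟩ := hx ⟨hs.1.trans_lt (lt_of_le_of_ne hxI.1 hx'.1.symm),
      (lt_of_le_of_ne hxI.2 hx'.2).trans_le ht.2⟩
    simpa [hd.deriv] using hd0
  linarith

/-! ### Cooperative differential inequalities -/

/-- Strict positivity propagates through the system `X' ≥ αY`, `Y' ≥ βX`, by a first-exit-time
argument. -/
lemma coop_strict {X Y α β : ℝ → ℝ} {a c : ℝ} (hac : a ≤ c)
    (hX : AbsolutelyContinuousOnInterval X a c) (hY : AbsolutelyContinuousOnInterval Y a c)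
    (hα : ∀ x, 0 ≤ α x) (hβ : ∀ x, 0 ≤ β x)
    (hX' : ∀ᵐ x, x ∈ Ioo a c → ∃ d, HasDerivAt X d x ∧ α x * Y x ≤ d)
    (hY' : ∀ᵐ x, x ∈ Ioo a c → ∃ d, HasDerivAt Y d x ∧ β x * X x ≤ d)
    (hXa : 0 < X a) (hYa : 0 < Y a) : ∀ x ∈ Icc a c, 0 < X x ∧ 0 < Y x := by
  have hXc : ContinuousOn X (Icc a c) := by simpa [uIcc_of_le hac] using hX.continuousOn
  have hYc : ContinuousOn Y (Icc a c) := by simpa [uIcc_of_le hac] using hY.continuousOn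
  by_contra hcon
  push Not at hcon
  obtain ⟨z, hz, hzn⟩ := hcon
  set A : Set ℝ := Icc a c ∩ (fun x => min (X x) (Y x)) ⁻¹' Iic 0
  have hAcl : IsClosed A := (hXc.inf hYc).preimage_isClosed_of_isClosed isClosed_Icc isClosed_Iic
  have hzA : z ∈ A := by
    refine ⟨hz, ?_⟩
    rcases le_or_gt (X z) 0 with h | h
    · exact (min_le_left _ _).trans h
    · exact (min_le_right _ _).trans (hzn h)
  have hbdd : BddBelow A := ⟨a, fun x hx => hx.1.1⟩
  have hT : sInf A ∈ A := hAcl.csInf_mem ⟨z, hzA⟩ hbdd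
  set T := sInf A
  -- Before the first exit time `T` both components are positive, hence nondecreasing.
  have hpos : ∀ x ∈ Ioo a T, 0 ≤ X x ∧ 0 ≤ Y x := by
    intro x hx
    have : x ∉ A := fun h => absurd (csInf_le hbdd h) (not_le.2 hx.2)
    have h2 : 0 < min (X x) (Y x) := by
      by_contra h
      exact this ⟨⟨hx.1.le, hx.2.le.trans hT.1.2⟩, not_lt.1 h⟩
    exact ⟨(lt_min_iff.1 h2).1.le, (lt_min_iff.1 h2).2.le⟩
  have hsub : uIcc a T ⊆ uIcc a c := by
    rw [uIcc_of_le hac, uIcc_of_le hT.1.1]; exact Icc_subset_Icc le_rfl hT.1.2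
  have mX := monotoneOn_of_ae_deriv_nonneg hT.1.1 (hX.mono hsub) (by
    filter_upwards [hX'] with x hx hxI
    obtain ⟨d, hd, hle⟩ := hx ⟨hxI.1, hxI.2.trans_le hT.1.2⟩
    exact ⟨d, hd, (mul_nonneg (hα x) (hpos x hxI).2).trans hle⟩)
  have mY := monotoneOn_of_ae_deriv_nonneg hT.1.1 (hY.mono hsub) (by
    filter_upwards [hY'] with x hx hxI
    obtain ⟨d, hd, hle⟩ := hx ⟨hxI.1, hxI.2.trans_le hT.1.2⟩
    exact ⟨d, hd, (mul_nonneg (hβ x) (hpos x hxI).1).trans hle⟩)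
  have h1 := mX (left_mem_Icc.2 hT.1.1) (right_mem_Icc.2 hT.1.1) hT.1.1
  have h2 := mY (left_mem_Icc.2 hT.1.1) (right_mem_Icc.2 hT.1.1) hT.1.1
  have h3 : min (X T) (Y T) ≤ 0 := hT.2
  rcases min_le_iff.1 h3 with h | h <;> linarith

/-- Nonnegativity propagates through the cooperative system `X' ≥ αY`, `Y' ≥ βX`, `α, β ≥ 0`.
Adding `ε e` to both components, where `e' = (α + β) e`, preserves the system and reduces to
strictly positive initial data. -/
lemma coop {X Y α β : ℝ → ℝ} {a c : ℝ} (hac : a ≤ c)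
    (hX : AbsolutelyContinuousOnInterval X a c) (hY : AbsolutelyContinuousOnInterval Y a c)
    (hα : ∀ x, 0 ≤ α x) (hβ : ∀ x, 0 ≤ β x)
    (hαi : LocallyIntegrable α volume) (hβi : LocallyIntegrable β volume)
    (hX' : ∀ᵐ x, x ∈ Ioo a c → ∃ d, HasDerivAt X d x ∧ α x * Y x ≤ d)
    (hY' : ∀ᵐ x, x ∈ Ioo a c → ∃ d, HasDerivAt Y d x ∧ β x * X x ≤ d)
    (hXa : 0 ≤ X a) (hYa : 0 ≤ Y a) : ∀ x ∈ Icc a c, 0 ≤ X x ∧ 0 ≤ Y x := by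
  obtain ⟨e, he, heac, -, hed⟩ := exists_integrating_factor (hαi.add hβi)
  have main : ∀ ε > 0, ∀ x ∈ Icc a c, 0 < X x + ε * e x ∧ 0 < Y x + ε * e x := by
    intro ε hε
    have hεe : ∀ x, 0 < ε * e x := fun x => mul_pos hε (he x)
    refine coop_strict (α := α) (β := β) hac (hX.fun_add ((heac a c).const_mul ε))
      (hY.fun_add ((heac a c).const_mul ε)) hα hβ ?_ ?_ (by linarith [hεe a])
      (by linarith [hεe a])
    · filter_upwards [hX', hed] with x hx hex hxI
      obtain ⟨d, hd, hle⟩ := hx hxI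
      refine ⟨_, hd.fun_add (hex.const_mul ε), ?_⟩
      have := mul_nonneg (hβ x) (hεe x).le
      simp only [Pi.add_apply]
      nlinarith
    · filter_upwards [hY', hed] with x hx hex hxI
      obtain ⟨d, hd, hle⟩ := hx hxI
      refine ⟨_, hd.fun_add (hex.const_mul ε), ?_⟩
      have := mul_nonneg (hα x) (hεe x).le
      simp only [Pi.add_apply]
      nlinarith
  intro x hx
  have lim : ∀ Z : ℝ, (∀ ε > 0, 0 < Z + ε * e x) → 0 ≤ Z := by
    intro Z hZ
    by_contra h
    push Not at h
    have := hZ (-Z / e x) (div_pos (by linarith) (he x))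
    rw [div_mul_cancel₀ _ (he x).ne'] at this
    linarith
  exact ⟨lim _ fun ε hε => (main ε hε x hx).1, lim _ fun ε hε => (main ε hε x hx).2⟩

/-! ### The equation `(σ²/2) U'' + b U' - λ U = -g` -/

/-- `U` is a solution, with derivative `U'`, of `(σ²/2) U'' + b U' - λ U = -g` on `[a, c]`:
`U'` is absolutely continuous and the equation holds almost everywhere. -/
structure IsSol (b σ g : ℝ → ℝ) (lam : ℝ) (U U' : ℝ → ℝ) (a c : ℝ) : Prop where
  hasDeriv : ∀ x ∈ Icc a c, HasDerivWithinAt U (U' x) (Icc a c) x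
  absCont : AbsCont U' a c
  eqn : ∀ᵐ x, x ∈ Ioo a c → ∃ d, HasDerivAt U' d x ∧
    (σ x) ^ 2 / 2 * d + b x * U' x - lam * U x = -g x

section IsSol

variable {b σ g g₂ : ℝ → ℝ} {lam : ℝ} {U U' W W' : ℝ → ℝ} {a c a' c' : ℝ}

lemma IsSol.mono (h : IsSol b σ g lam U U' a c) (ha : a ≤ a') (hc : c' ≤ c) :
    IsSol b σ g lam U U' a' c' where
  hasDeriv x hx := (h.hasDeriv x (Icc_subset_Icc ha hc hx)).mono (Icc_subset_Icc ha hc)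
  absCont := h.absCont.mono ha hc
  eqn := by
    filter_upwards [h.eqn] with x hx hxI using hx (Ioo_subset_Ioo ha hc hxI)

lemma IsSol.neg (h : IsSol b σ g lam U U' a c) :
    IsSol b σ (fun x => -g x) lam (fun x => -U x) (fun x => -U' x) a c where
  hasDeriv x hx := (h.hasDeriv x hx).fun_neg
  absCont := h.absCont.neg
  eqn := by
    filter_upwards [h.eqn] with x hx hxI
    obtain ⟨d, hd, he⟩ := hx hxI
    exact ⟨-d, hd.fun_neg, by linarith⟩

lemma IsSol.sub (h : IsSol b σ g lam U U' a c) (h₂ : IsSol b σ g₂ lam W W' a c) :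
    IsSol b σ (fun x => g x - g₂ x) lam (fun x => U x - W x) (fun x => U' x - W' x) a c where
  hasDeriv x hx := (h.hasDeriv x hx).fun_sub (h₂.hasDeriv x hx)
  absCont := h.absCont.sub h₂.absCont
  eqn := by
    filter_upwards [h.eqn, h₂.eqn] with x hx hx₂ hxI
    obtain ⟨d, hd, he⟩ := hx hxI
    obtain ⟨d₂, hd₂, he₂⟩ := hx₂ hxI
    exact ⟨d - d₂, hd.fun_sub hd₂, by linarith⟩

lemma IsSol.reflect (h : IsSol b σ g lam U U' a c) :
    IsSol (fun x => -b (-x)) (fun x => σ (-x)) (fun x => g (-x)) lam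
      (fun x => U (-x)) (fun x => -U' (-x)) (-c) (-a) where
  hasDeriv x hx := by
    have hx' : -x ∈ Icc a c := ⟨by linarith [hx.2], by linarith [hx.1]⟩
    have := (h.hasDeriv (-x) hx').scomp x (hasDerivAt_neg x).hasDerivWithinAt
      (s := Icc (-c) (-a)) (fun y hy => ⟨by linarith [hy.2], by linarith [hy.1]⟩)
    simpa [Function.comp_def] using this
  absCont := h.absCont.reflect.neg
  eqn := by
    have := (Measure.measurePreserving_neg (volume : Measure ℝ)).quasiMeasurePreserving.ae h.eqn
    filter_upwards [this] with x hx hxI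
    obtain ⟨d, hd, he⟩ := hx ⟨by linarith [hxI.2], by linarith [hxI.1]⟩
    refine ⟨d, ?_, by linarith⟩
    have := (hd.scomp x (hasDerivAt_neg x)).fun_neg
    simpa [Function.comp_def] using this

lemma IsSol.acoi_deriv (h : IsSol b σ g lam U U' a c) (hac : a ≤ c) :
    AbsolutelyContinuousOnInterval U' a c := h.absCont.toInterval hac

lemma IsSol.continuousOn (h : IsSol b σ g lam U U' a c) : ContinuousOn U (Icc a c) :=
  fun x hx => (h.hasDeriv x hx).continuousWithinAt

lemma IsSol.hasDerivAt (h : IsSol b σ g lam U U' a c) {x : ℝ} (hx : x ∈ Ioo a c) :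
    HasDerivAt U (U' x) x :=
  (h.hasDeriv x (Ioo_subset_Icc_self hx)).hasDerivAt (Icc_mem_nhds hx.1 hx.2)

lemma IsSol.acoi (h : IsSol b σ g lam U U' a c) (hac : a ≤ c) :
    AbsolutelyContinuousOnInterval U a c := by
  obtain ⟨C, hC⟩ := (h.acoi_deriv hac).exists_bound
  rw [uIcc_of_le hac] at hC
  have hL : LipschitzOnWith (Real.toNNReal C) U (uIcc a c) := by
    rw [uIcc_of_le hac]
    refine LipschitzOnWith.of_dist_le_mul fun x hx y hy => ?_
    have := Convex.norm_image_sub_le_of_norm_hasDerivWithin_le h.hasDeriv hC (convex_Icc a c) hy hx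
    rw [dist_eq_norm, dist_eq_norm]
    exact this.trans (by gcongr; exact Real.le_coe_toNNReal C)
  exact hL.absolutelyContinuousOnInterval

/-- One-sided comparison principle. With `p` the integrating factor `p' = (2b/σ²) p`, the pair
`(U, p U')` solves a cooperative system whenever `g ≤ 0`; the last conclusion records that `p U'`
is nonnegative and nondecreasing in a form that does not mention `p`. -/
lemma IsSol.nonneg (hES : ES b σ) (hlam : 0 ≤ lam) (h : IsSol b σ g lam U U' a c) (hac : a ≤ c)
    (hg : ∀ x ∈ Ioo a c, g x ≤ 0) (hU : 0 ≤ U a) (hU' : 0 ≤ U' a) :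
    (∀ x ∈ Icc a c, 0 ≤ U x ∧ 0 ≤ U' x) ∧ MonotoneOn U (Icc a c) ∧
      ∀ s t, a ≤ s → s ≤ t → t ≤ c → U' t = 0 → U' s = 0 := by
  obtain ⟨-, -, hσ, hσi, hbi⟩ := hES
  obtain ⟨p, hp, hpac, hpc, hpd⟩ := exists_integrating_factor (hbi.smul (2 : ℝ))
  have hα : Continuous fun x => 1 / p x := continuous_const.div hpc fun x => (hp x).ne'
  have hβ : LocallyIntegrable (fun x => (2 * lam * p x) * (1 / (σ x) ^ 2)) volume := by
    rw [← locallyIntegrableOn_univ]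
    exact (locallyIntegrableOn_univ.2 hσi).continuousOn_mul
      (continuous_const.mul hpc).continuousOn isOpen_univ.isLocallyClosed
  have hP : AbsolutelyContinuousOnInterval (fun x => p x * U' x) a c :=
    (hpac a c).fun_mul (h.acoi_deriv hac)
  have hβ0 : ∀ x, 0 ≤ (2 * lam * p x) * (1 / (σ x) ^ 2) := fun x => by
    have := (hp x).le
    positivity
  have hP' : ∀ᵐ x, x ∈ Ioo a c → ∃ d, HasDerivAt (fun x => p x * U' x) d x ∧
      (2 * lam * p x) * (1 / (σ x) ^ 2) * U x ≤ d := by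
    filter_upwards [h.eqn, hpd] with x hx hpx hxI
    obtain ⟨d, hd, he⟩ := hx hxI
    refine ⟨_, hpx.fun_mul hd, ?_⟩
    have hσ2 : 0 < (σ x) ^ 2 := by have := hσ x; positivity
    have hd' : d = 2 / (σ x) ^ 2 * (-g x - b x * U' x + lam * U x) := by
      rw [div_mul_eq_mul_div, eq_div_iff hσ2.ne']; linarith
    have hgx : 0 ≤ p x * (2 / (σ x) ^ 2) * (-g x) :=
      mul_nonneg (mul_nonneg (hp x).le (by positivity)) (by linarith [hg x hxI])
    have : (2 : ℝ) • (b x / σ x ^ 2) * p x * U' x + p x * d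
        = 2 * lam * p x * (1 / σ x ^ 2) * U x + p x * (2 / (σ x) ^ 2) * (-g x) := by
      rw [hd', smul_eq_mul]; ring
    simp only [Pi.smul_apply]
    linarith
  have key := coop hac (h.acoi hac) hP (fun x => (one_div_pos.2 (hp x)).le) hβ0
    hα.locallyIntegrable hβ
    (by
      refine Eventually.of_forall fun x hx => ⟨_, h.hasDerivAt hx, le_of_eq ?_⟩
      have := (hp x).ne'
      field_simp) hP' hU (mul_nonneg (hp a).le hU')
  have hnn : ∀ x ∈ Icc a c, 0 ≤ U x ∧ 0 ≤ U' x := fun x hx =>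
    ⟨(key x hx).1, nonneg_of_mul_nonneg_right (key x hx).2 (hp x)⟩
  refine ⟨hnn, ?_, ?_⟩
  · exact monotoneOn_of_ae_deriv_nonneg hac (h.acoi hac) (Eventually.of_forall fun x hx =>
      ⟨_, h.hasDerivAt hx, (hnn x (Ioo_subset_Icc_self hx)).2⟩)
  · intro s t has hst htc ht
    have mP := monotoneOn_of_ae_deriv_nonneg hac hP (by
      filter_upwards [hP'] with x hx hxI
      obtain ⟨d, hd, hle⟩ := hx hxI
      exact ⟨d, hd, (mul_nonneg (hβ0 x) (key x (Ioo_subset_Icc_self hxI)).1).trans hle⟩)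
    have hsI : s ∈ Icc a c := ⟨has, hst.trans htc⟩
    have h1 := mP hsI ⟨has.trans hst, htc⟩ hst
    simp only [ht, mul_zero] at h1
    have h2 := (key s hsI).2
    have h3 : p s * U' s = 0 := le_antisymm h1 h2
    exact (mul_eq_zero.1 h3).resolve_left (ne_of_gt (hp s))

/-- Strict version of the comparison principle: a solution with zero initial data and `g < 0`
becomes positive and strictly increasing immediately. -/
lemma IsSol.pos (hES : ES b σ) (hlam : 0 ≤ lam) (h : IsSol b σ g lam U U' a c) (hac : a < c)
    (hg : ∀ x ∈ Ioo a c, g x < 0) (hU : U a = 0) (hU' : U' a = 0) :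
    ∀ x ∈ Ioc a c, 0 < U x ∧ 0 < U' x := by
  obtain ⟨hnn, hmono, hz⟩ := h.nonneg hES hlam hac.le (fun x hx => (hg x hx).le) hU.ge hU'.ge
  have hpos' : ∀ t ∈ Ioc a c, 0 < U' t := by
    intro t ht
    refine lt_of_le_of_ne (hnn t ⟨ht.1.le, ht.2⟩).2 fun h0 => ?_
    have hae : ∀ᵐ x, x ∉ Ioo a t := by
      filter_upwards [h.eqn] with x hx hxI
      have hxI' : x ∈ Ioo a c := ⟨hxI.1, hxI.2.trans_le ht.2⟩
      obtain ⟨d, hd, he⟩ := hx hxI'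
      have hloc : U' =ᶠ[nhds x] fun _ => 0 := by
        filter_upwards [Ioo_mem_nhds hxI.1 hxI.2] with y hy
        exact hz y t hy.1.le hy.2.le ht.2 h0.symm
      have hd0 : d = 0 := hd.unique ((hasDerivAt_const x (0 : ℝ)).congr_of_eventuallyEq hloc)
      rw [hd0, hloc.self_of_nhds] at he
      have h1 := mul_nonneg hlam (hnn x (Ioo_subset_Icc_self hxI')).1
      have h2 := hg x hxI'
      linarith
    rw [ae_iff] at hae
    simp only [not_not, mem_Ioo] at hae
    have : volume (Ioo a t) = 0 := hae
    rw [Real.volume_Ioo, ENNReal.ofReal_eq_zero] at this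
    linarith [ht.1]
  intro x hx
  refine ⟨?_, hpos' x hx⟩
  have hs : StrictMonoOn U (Icc a c) := by
    refine strictMonoOn_of_deriv_pos (convex_Icc a c) h.continuousOn fun y hy => ?_
    rw [interior_Icc] at hy
    rw [(h.hasDerivAt hy).deriv]
    exact hpos' y ⟨hy.1, hy.2.le⟩
  have := hs (left_mem_Icc.2 hac.le) ⟨hx.1.le, hx.2⟩ hx.1
  linarith

end IsSol

lemma ES.reflect {b σ : ℝ → ℝ} (h : ES b σ) : ES (fun x => -b (-x)) (fun x => σ (-x)) := by
  obtain ⟨hb, hσ, hσ0, hi, hbi⟩ := h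
  have hL : ∀ F : ℝ → ℝ, LocallyIntegrable F volume →
      LocallyIntegrable (fun x => F (-x)) volume := by
    intro F hF
    have h1 : LocallyIntegrable F (Measure.map (Homeomorph.neg ℝ) volume) := by
      have : Measure.map (Homeomorph.neg ℝ) volume = (volume : Measure ℝ) :=
        (Measure.measurePreserving_neg (volume : Measure ℝ)).map_eq
      rwa [this]
    exact (locallyIntegrable_map_homeomorph (Homeomorph.neg ℝ)).1 h1
  refine ⟨(hb.comp measurable_neg).neg, hσ.comp measurable_neg, fun x => hσ0 _, hL _ hi, ?_⟩
  convert (hL _ hbi).neg using 1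
  ext x
  simp [neg_div]

lemma Shape.reflect {f : ℝ → ℝ} {x1l x1r x2l x2r : ℝ} (h : Shape f x1l x1r x2l x2r) :
    Shape (fun x => f (-x)) (-x2r) (-x2l) (-x1r) (-x1l) := by
  obtain ⟨h1, h2, h3, hp, hz, hn⟩ := h
  refine ⟨by linarith, by linarith, by linarith, fun x hx => hp _ ?_, fun x hx => hz _ ?_,
    fun x hx => hn _ ?_⟩
  · exact ⟨by linarith [hx.2], by linarith [hx.1]⟩
  · rcases hx with hx | hx
    · exact Or.inr ⟨by linarith [hx.2], by linarith [hx.1]⟩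
    · exact Or.inl ⟨by linarith [hx.2], by linarith [hx.1]⟩
  · rcases hx with hx | hx
    · exact Or.inr (by simp only [mem_Iio, mem_Ioi] at *; linarith)
    · exact Or.inl (by simp only [mem_Iio, mem_Ioi] at *; linarith)

lemma Shape.nonneg {f : ℝ → ℝ} {x1l x1r x2l x2r : ℝ} (h : Shape f x1l x1r x2l x2r) {x : ℝ}
    (h1 : x1l ≤ x) (h2 : x ≤ x2r) : 0 ≤ f x := by
  obtain ⟨-, -, -, hp, hz, -⟩ := h
  rcases le_or_gt x x1r with h3 | h3
  · exact (hz x (Or.inl ⟨h1, h3⟩)).ge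
  · rcases lt_or_ge x x2l with h4 | h4
    · exact (hp x ⟨h3, h4⟩).le
    · exact (hz x (Or.inr ⟨h4, h2⟩)).ge

/-! ### Free boundary solutions -/

/-- A solution of the free boundary problem with its derivative `V'` made explicit. -/
structure IsFB (b σ f : ℝ → ℝ) (lam : ℝ) (V V' : ℝ → ℝ) (x1 x2 : ℝ) : Prop where
  lt : x1 < x2
  zero : ∀ x ∉ Ioo x1 x2, V x = 0
  left : V' x1 = 0
  right : V' x2 = 0
  sol : IsSol b σ f lam V V' x1 x2

section IsFB

variable {b σ f : ℝ → ℝ} {lam x1l x1r x2l x2r : ℝ} {V V' W W' : ℝ → ℝ} {x1 x2 y1 y2 : ℝ}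

lemma SolFBP1114.exists_isFB (h : SolFBP1114 b σ f lam V x1 x2) :
    ∃ V', IsFB b σ f lam V V' x1 x2 := by
  obtain ⟨hlt, hz, V', hd, -, h1, h2, hac, he⟩ := h
  exact ⟨V', hlt, hz, h1, h2, hd, hac, he⟩

lemma IsFB.zero_left (h : IsFB b σ f lam V V' x1 x2) : V x1 = 0 := h.zero _ (by simp)

lemma IsFB.zero_right (h : IsFB b σ f lam V V' x1 x2) : V x2 = 0 := h.zero _ (by simp)

lemma IsFB.reflect (h : IsFB b σ f lam V V' x1 x2) :
    IsFB (fun x => -b (-x)) (fun x => σ (-x)) (fun x => f (-x)) lam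
      (fun x => V (-x)) (fun x => -V' (-x)) (-x2) (-x1) where
  lt := by linarith [h.lt]
  zero x hx := h.zero _ fun hx' => hx ⟨by linarith [hx'.2], by linarith [hx'.1]⟩
  left := by simp [h.right]
  right := by simp [h.left]
  sol := h.sol.reflect

/-- Between its left boundary point and `x1l`, the solution and its derivative are positive. -/
lemma IsFB.pos_left (hES : ES b σ) (hlam : 0 ≤ lam) (hf : Shape f x1l x1r x2l x2r)
    (h : IsFB b σ f lam V V' x1 x2) :
    ∀ x ∈ Ioc x1 x1l, x ≤ x2 → 0 < V x ∧ 0 < V' x := by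
  intro x hx hx2
  exact (h.sol.mono le_rfl hx2).pos hES hlam hx.1
    (fun y hy => hf.2.2.2.2.2 y (Or.inl (hy.2.trans_le hx.2))) h.zero_left h.left x
    ⟨hx.1, le_rfl⟩

lemma IsFB.pos_right (hES : ES b σ) (hlam : 0 ≤ lam) (hf : Shape f x1l x1r x2l x2r)
    (h : IsFB b σ f lam V V' x1 x2) :
    ∀ x ∈ Ico x2r x2, x1 ≤ x → 0 < V x ∧ V' x < 0 := by
  intro x hx hx1
  have := h.reflect.pos_left hES.reflect hlam hf.reflect (-x)
    ⟨by linarith [hx.2], by linarith [hx.1]⟩ (by linarith)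
  simp only [neg_neg] at this
  exact ⟨this.1, by linarith [this.2]⟩

lemma IsFB.lt_x2r (hES : ES b σ) (hlam : 0 ≤ lam) (hf : Shape f x1l x1r x2l x2r)
    (h : IsFB b σ f lam V V' x1 x2) : x1 < x2r := by
  by_contra hcon
  have := (h.pos_right hES hlam hf x1 ⟨not_lt.1 hcon, h.lt⟩ le_rfl).2
  rw [h.left] at this
  exact lt_irrefl _ this

/-- The left free boundary of a nontrivial solution lies left of `x1l`. Otherwise `f ≥ 0` on
`(x1, x2r)`, which forces `V ≤ 0` and `V' ≤ 0` there; this contradicts `V = 0` at `x2` and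
nontriviality when `x2 ≤ x2r`, and positivity of `V` at `x2r` when `x2 > x2r`. -/
lemma IsFB.left_lt (hES : ES b σ) (hlam : 0 ≤ lam) (hf : Shape f x1l x1r x2l x2r)
    (h : IsFB b σ f lam V V' x1 x2) (hnt : ∃ x, V x ≠ 0) : x1 < x1l := by
  by_contra hcon
  push Not at hcon
  rcases le_or_gt x2 x2r with hx2 | hx2
  · obtain ⟨hnn, hmono, -⟩ := h.sol.neg.nonneg hES hlam h.lt.le
      (fun x hx => by
        have := hf.nonneg (hcon.trans hx.1.le) (hx.2.le.trans hx2)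
        linarith)
      (by simp [h.zero_left]) (by simp [h.left])
    obtain ⟨x, hx⟩ := hnt
    have hxI : x ∈ Ioo x1 x2 := by
      by_contra hn
      exact hx (h.zero x hn)
    have h1 := (hnn x (Ioo_subset_Icc_self hxI)).1
    have h2 := hmono (Ioo_subset_Icc_self hxI) (right_mem_Icc.2 h.lt.le) hxI.2.le
    simp only [h.zero_right] at h2
    exact hx (by linarith)
  · have hlt := h.lt_x2r hES hlam hf
    obtain ⟨hnn, -, -⟩ := (h.sol.mono le_rfl hx2.le).neg.nonneg hES hlam hlt.le
      (fun x hx => by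
        have := hf.nonneg (hcon.trans hx.1.le) hx.2.le
        linarith)
      (by simp [h.zero_left]) (by simp [h.left])
    have h1 := (hnn x2r (right_mem_Icc.2 hlt.le)).1
    have h2 := (h.pos_right hES hlam hf x2r ⟨le_rfl, hx2⟩ hlt.le).1
    linarith

lemma IsFB.lt_right (hES : ES b σ) (hlam : 0 ≤ lam) (hf : Shape f x1l x1r x2l x2r)
    (h : IsFB b σ f lam V V' x1 x2) (hnt : ∃ x, V x ≠ 0) : x2r < x2 := by
  have := h.reflect.left_lt hES.reflect hlam hf.reflect (by
    obtain ⟨x, hx⟩ := hnt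
    exact ⟨-x, by simpa using hx⟩)
  linarith

/-- Two nontrivial solutions cannot have `x1 < y1`: the difference `V - W` solves the homogeneous
equation with positive data at `y1`, so it stays positive and nondecreasing up to `min x2 y2`,
where the boundary behaviour of `V` and `W` forbids one or the other. -/
lemma IsFB.not_left_lt (hES : ES b σ) (hlam : 0 ≤ lam) (hf : Shape f x1l x1r x2l x2r)
    (hV : IsFB b σ f lam V V' x1 x2) (hVn : ∃ x, V x ≠ 0)
    (hW : IsFB b σ f lam W W' y1 y2) (hWn : ∃ x, W x ≠ 0) : ¬ x1 < y1 := by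
  intro hlt
  have hVr := hV.lt_right hES hlam hf hVn
  have hWl := hW.left_lt hES hlam hf hWn
  have hWr := hW.lt_right hES hlam hf hWn
  have h12 : x1l ≤ x2r := by
    obtain ⟨h1, h2, h3, -⟩ := hf
    linarith
  have hVy := hV.pos_left hES hlam hf y1 ⟨hlt, hWl.le⟩ (by linarith)
  have hm1 : y1 < min x2 y2 := lt_min (by linarith) (by linarith)
  have hD := (hV.sol.mono hlt.le (min_le_left x2 y2)).sub (hW.sol.mono le_rfl (min_le_right x2 y2))
  obtain ⟨hnn, hmono, -⟩ := hD.nonneg hES hlam hm1.le (fun x _ => by simp)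
    (by simp only [hW.zero_left]; linarith [hVy.1]) (by simp only [hW.left]; linarith [hVy.2])
  have h1 := hmono (left_mem_Icc.2 hm1.le) (right_mem_Icc.2 hm1.le) hm1.le
  have h2 := (hnn _ (right_mem_Icc.2 hm1.le)).2
  simp only [hW.zero_left] at h1
  rcases le_or_gt x2 y2 with hc | hc
  · rw [min_eq_left hc, hV.zero_right] at h1
    have hW2 : 0 ≤ W x2 := by
      rcases hc.eq_or_lt with he | hl
      · rw [he, hW.zero_right]
      · exact (hW.pos_right hES hlam hf x2 ⟨hVr.le, hl⟩ (by linarith)).1.le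
    linarith [hVy.1]
  · rw [min_eq_right hc.le, hW.right] at h2
    have := (hV.pos_right hES hlam hf y2 ⟨hWr.le, hc⟩ (by linarith)).2
    linarith

lemma IsFB.left_eq (hES : ES b σ) (hlam : 0 ≤ lam) (hf : Shape f x1l x1r x2l x2r)
    (hV : IsFB b σ f lam V V' x1 x2) (hVn : ∃ x, V x ≠ 0)
    (hW : IsFB b σ f lam W W' y1 y2) (hWn : ∃ x, W x ≠ 0) : x1 = y1 :=
  le_antisymm (not_lt.1 (hW.not_left_lt hES hlam hf hWn hV hVn))
    (not_lt.1 (hV.not_left_lt hES hlam hf hVn hW hWn))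

/-- Solutions with the same boundary points are ordered both ways, as both have zero data at the
left one. -/
lemma IsFB.le_of_same (hES : ES b σ) (hlam : 0 ≤ lam)
    (hV : IsFB b σ f lam V V' x1 x2) (hW : IsFB b σ f lam W W' x1 x2) (x : ℝ) : W x ≤ V x := by
  by_cases hx : x ∈ Ioo x1 x2
  · obtain ⟨hnn, -, -⟩ := (hV.sol.sub hW.sol).nonneg hES hlam hV.lt.le (fun x _ => by simp)
      (by simp [hV.zero_left, hW.zero_left]) (by simp [hV.left, hW.left])
    exact sub_nonneg.1 (hnn x (Ioo_subset_Icc_self hx)).1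
  · rw [hV.zero x hx, hW.zero x hx]

end IsFB

/-- **Uniqueness in Theorem 2.1.** The free boundary problem (2.11)–(2.14) has at most one
nontrivial solution: if `(V, x1*, x2*)` and `(W, y1*, y2*)` are both nontrivial solutions,
then `x1* = y1*`, `x2* = y2*` and `V = W` on `ℝ`. -/
theorem fbp_uniqueness
    (b σ f : ℝ → ℝ) (lam : ℝ) (hlam : 0 ≤ lam)
    (hES : ES b σ) (hmf : Measurable f)
    (x1l x1r x2l x2r : ℝ) (hf : Shape f x1l x1r x2l x2r)
    (h23 : Cond23 f σ x1l x1r x2l x2r)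
    (V : ℝ → ℝ) (x1 x2 : ℝ)
    (hsolV : SolFBP1114 b σ f lam V x1 x2) (hntV : ∃ x, V x ≠ 0)
    (W : ℝ → ℝ) (y1 y2 : ℝ)
    (hsolW : SolFBP1114 b σ f lam W y1 y2) (hntW : ∃ x, W x ≠ 0) :
    x1 = y1 ∧ x2 = y2 ∧ ∀ x : ℝ, V x = W x := by
  obtain ⟨V', hV⟩ := hsolV.exists_isFB
  obtain ⟨W', hW⟩ := hsolW.exists_isFB
  have h1 : x1 = y1 := hV.left_eq hES hlam hf hntV hW hntW
  have h2 : -x2 = -y2 := hV.reflect.left_eq hES.reflect hlam hf.reflect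
    (hntV.imp' (fun x => -x) fun x hx => by simpa using hx) hW.reflect
    (hntW.imp' (fun x => -x) fun x hx => by simpa using hx)
  obtain rfl : x1 = y1 := h1
  obtain rfl : x2 = y2 := neg_injective h2
  exact ⟨rfl, rfl, fun x =>
    le_antisymm (hW.le_of_same hES hlam hV x) (hV.le_of_same hES hlam hW x)⟩
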